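/- Let A be a finite-dimensional Lie algebra over a field F of dimension d ≥ 2, regarded as a non-unital F-algebra whose multiplication is the Lie bracket. Then l(A) ≤ d − 1. -/

import Mathlib

/-!
Framework: length of finite-dimensional not necessarily associative,
not necessarily unital algebras (non-unital convention: `L_0(S) = 0`).
The multiplication of the algebra is passed explicitly as a binary
operation `μ`, so that the same definitions apply to an algebra, to its
commutator algebra, to a Lie bracket, etc.
-/

open Submodule Module

/-- `IsWord μ S k w`: `w` is a product of `k` elements of `S` (with respect to the
multiplication `μ`) with some placement of parentheses. -/
inductive IsWord {A : Type*} (μ : A → A → A) (S : Set A) : ℕ → A → Prop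
  | base {a : A} (ha : a ∈ S) : IsWord μ S 1 a
  | mul {m n : ℕ} {a b : A} (ha : IsWord μ S m a) (hb : IsWord μ S n b) :
      IsWord μ S (m + n) (μ a b)

/-- The multiplication of an algebra, as a plain binary operation. -/
def amul (A : Type*) [Mul A] : A → A → A := fun a b => a * b

section
variable (F : Type*) {A : Type*} [Field F] [AddCommGroup A] [Module F A]

/-- `L_i(S)`: the linear span of all words in `S` of length at most `i`
(non-unital convention, so `L_0(S) = 0`). -/
def Lset (μ : A → A → A) (S : Set A) (i : ℕ) : Submodule F A :=
  Submodule.span F {a | ∃ k, k ≤ i ∧ IsWord μ S k a}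

/-- `S` generates the algebra, i.e. the span of all words in `S` is everything. -/
def Generates (μ : A → A → A) (S : Set A) : Prop :=
  Submodule.span F {a | ∃ k, IsWord μ S k a} = ⊤

/-- `l(S)`: the length of a generating set `S`, the least `k` with `L_k(S) = A`. -/
noncomputable def lenSet (μ : A → A → A) (S : Set A) : ℕ :=
  sInf {k | Lset F μ S k = ⊤}

/-- An irreducible word of length `k` in `S`. -/
def IrredWord (μ : A → A → A) (S : Set A) (k : ℕ) (w : A) : Prop :=
  IsWord μ S k w ∧ ∀ m, m < k → w ∉ Lset F μ S m

end

section
variable {A : Type*}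

/-- The set `P(x,y,z)` of monomials. -/
def Pset (μ : A → A → A) (x y z : A) : Set A :=
  {μ (μ x z) y, μ (μ z x) y, μ (μ y z) x, μ (μ z y) x,
   μ x (μ z y), μ x (μ y z), μ y (μ x z), μ y (μ z x),
   μ x y, μ y x, μ x z, μ z x, μ y z, μ z y, x, y, z}

/-- The set `Q_l(x,y,z)` of monomials. -/
def Qlset (μ : A → A → A) (x y z : A) : Set A :=
  {μ x (μ z y), μ x (μ y z), μ y (μ x z), μ y (μ z x),
   μ x y, μ y x, μ x z, μ z x, μ y z, μ z y, x, y, z}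

/-- The set `Q_r(x,y,z)` of monomials. -/
def Qrset (μ : A → A → A) (x y z : A) : Set A :=
  {μ (μ x z) y, μ (μ z x) y, μ (μ y z) x, μ (μ z y) x,
   μ x y, μ y x, μ x z, μ z x, μ y z, μ z y, x, y, z}

end

section
variable (F : Type*) {A : Type*} [Field F] [AddCommGroup A] [Module F A]

/-- A mixing algebra: `(xy)z` and `z(xy)` lie in the span of `P(x,y,z)`. -/
def IsMixing (μ : A → A → A) : Prop :=
  ∀ x y z : A, μ (μ x y) z ∈ Submodule.span F (Pset μ x y z) ∧
    μ z (μ x y) ∈ Submodule.span F (Pset μ x y z)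

/-- A sliding algebra: either `z(xy)` always lies in the span of `Q_r(x,y,z)`, or
`(xy)z` always lies in the span of `Q_l(x,y,z)`. -/
def IsSliding (μ : A → A → A) : Prop :=
  (∀ x y z : A, μ z (μ x y) ∈ Submodule.span F (Qrset μ x y z)) ∨
  (∀ x y z : A, μ (μ x y) z ∈ Submodule.span F (Qlset μ x y z))

end

/-!
In a mixing algebra, a subspace containing `S` that is stable under multiplication by elements of
`S` on both sides is stable under multiplication by all words in `S`, so it is everything when `S`
generates. As `L_{k+1}(S)` contains all products of `L_k(S)` with `S`, the chain
`L_1(S) ⊆ L_2(S) ⊆ ⋯` is therefore strict until it reaches the whole algebra. If moreover every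
square `x * x` lies in `F x`, as in a Lie algebra, then an `L_1(S)` of dimension at most `1` is
already stable, so a proper `L_1(S)` has dimension at least `2`. This saves one step.
-/

section MixingAlgebra

variable {F A : Type*} [Field F] [AddCommGroup A] [Module F A]

/-- The (two-sided) idealizer of a subspace `p`: the elements whose left and right multiplications
map `p` into itself. It is only a set, since `μ` need not be bilinear. -/
def idealizer (μ : A → A → A) (p : Submodule F A) : Set A :=
  {a | ∀ x ∈ p, μ a x ∈ p ∧ μ x a ∈ p}

section Words

variable {μ : A → A → A} {p : Submodule F A} {S : Set A}

lemma Pset_subset_of_mem_idealizer {a b x : A} (ha : a ∈ p) (hb : b ∈ p) (hx : x ∈ p)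
    (hai : a ∈ idealizer μ p) (hbi : b ∈ idealizer μ p) : Pset μ a b x ⊆ p := by
  obtain ⟨hax, hxa⟩ := hai x hx
  obtain ⟨hbx, hxb⟩ := hbi x hx
  simp only [Pset, Set.insert_subset_iff, Set.singleton_subset_iff, SetLike.mem_coe]
  exact ⟨(hbi _ hax).2, (hbi _ hxa).2, (hai _ hbx).2, (hai _ hxb).2,
    (hai _ hxb).1, (hai _ hbx).1, (hbi _ hax).1, (hbi _ hxa).1,
    (hai b hb).1, (hai b hb).2, hax, hxa, hbx, hxb, ha, hb, hx⟩

lemma IsMixing.mul_mem_idealizer (hμ : IsMixing F μ) {a b : A} (ha : a ∈ p) (hb : b ∈ p)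
    (hai : a ∈ idealizer μ p) (hbi : b ∈ idealizer μ p) : μ a b ∈ idealizer μ p := by
  intro x hx
  have hspan : span F (Pset μ a b x) ≤ p :=
    span_le.2 (Pset_subset_of_mem_idealizer ha hb hx hai hbi)
  exact ⟨hspan (hμ a b x).1, hspan (hμ a b x).2⟩

lemma IsWord.mem_and_mem_idealizer (hμ : IsMixing F μ) (hS : S ⊆ p) (hSi : S ⊆ idealizer μ p)
    {k : ℕ} {w : A} (hw : IsWord μ S k w) : w ∈ p ∧ w ∈ idealizer μ p := by
  induction hw with
  | base hs => exact ⟨hS hs, hSi hs⟩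
  | mul _ _ iha ihb =>
    exact ⟨(iha.2 _ ihb.1).1, hμ.mul_mem_idealizer iha.1 ihb.1 iha.2 ihb.2⟩

lemma Generates.eq_top_of_subset_idealizer (hμ : IsMixing F μ) (hgen : Generates F μ S)
    (hS : S ⊆ p) (hSi : S ⊆ idealizer μ p) : p = ⊤ := by
  rw [eq_top_iff, ← hgen, span_le]
  rintro w ⟨k, hw⟩
  exact (hw.mem_and_mem_idealizer hμ hS hSi).1

lemma Lset_mono : Monotone (Lset F μ S) :=
  fun _ _ hij => span_mono fun _ ⟨k, hk, hw⟩ => ⟨k, hk.trans hij, hw⟩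

lemma subset_Lset {k : ℕ} (hk : 1 ≤ k) : S ⊆ Lset F μ S k :=
  fun _ hs => subset_span ⟨1, hk, .base hs⟩

end Words

variable {μ : A →ₗ[F] A →ₗ[F] A} {S : Set A}

lemma mul_mem_Lset_add {i j : ℕ} {x y : A} (hx : x ∈ Lset F (μ · ·) S i)
    (hy : y ∈ Lset F (μ · ·) S j) : μ x y ∈ Lset F (μ · ·) S (i + j) := by
  have hmap : map₂ μ (Lset F (μ · ·) S i) (Lset F (μ · ·) S j) ≤ Lset F (μ · ·) S (i + j) := by
    rw [Lset, Lset, map₂_span_span, span_le]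
    rintro _ ⟨a, ⟨m, hm, ha⟩, b, ⟨n, hn, hb⟩, rfl⟩
    exact subset_span ⟨m + n, add_le_add hm hn, ha.mul hb⟩
  exact hmap (apply_mem_map₂ μ hx hy)

lemma Generates.Lset_lt_succ (hμ : IsMixing F (μ · ·)) (hgen : Generates F (μ · ·) S)
    {k : ℕ} (hk : 1 ≤ k) (hne : Lset F (μ · ·) S k ≠ ⊤) :
    Lset F (μ · ·) S k < Lset F (μ · ·) S (k + 1) := by
  refine (Lset_mono (Nat.le_add_right k 1)).lt_of_ne fun heq => hne ?_
  refine hgen.eq_top_of_subset_idealizer hμ (subset_Lset hk) fun s hs x hx => ?_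
  have hs₁ : s ∈ Lset F (μ · ·) S 1 := subset_Lset le_rfl hs
  rw [heq]
  exact ⟨Nat.add_comm k 1 ▸ mul_mem_Lset_add hs₁ hx, mul_mem_Lset_add hx hs₁⟩

lemma mul_mem_of_finrank_le_one (hsq : ∀ x, μ x x ∈ span F {x}) {p : Submodule F A}
    [FiniteDimensional F p] (hp : finrank F p ≤ 1) {x y : A} (hx : x ∈ p) (hy : y ∈ p) :
    μ x y ∈ p := by
  obtain ⟨v, rfl⟩ := (finrank_le_one_iff_isPrincipal p).1 hp
  obtain ⟨a, rfl⟩ := mem_span_singleton.1 hx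
  obtain ⟨b, rfl⟩ := mem_span_singleton.1 hy
  rw [map_smul, LinearMap.map_smul₂]
  exact smul_mem _ b (smul_mem _ a (hsq v))

variable [FiniteDimensional F A]

lemma Generates.two_le_finrank_Lset_one (hμ : IsMixing F (μ · ·))
    (hsq : ∀ x, μ x x ∈ span F {x}) (hgen : Generates F (μ · ·) S)
    (hne : Lset F (μ · ·) S 1 ≠ ⊤) : 2 ≤ finrank F (Lset F (μ · ·) S 1) := by
  by_contra! hlt
  have hS : S ⊆ Lset F (μ · ·) S 1 := subset_Lset le_rfl
  refine hne (hgen.eq_top_of_subset_idealizer hμ hS fun s hs x hx => ?_)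
  have hle : finrank F (Lset F (μ · ·) S 1) ≤ 1 := Nat.le_of_lt_succ hlt
  exact ⟨mul_mem_of_finrank_le_one hsq hle (hS hs) hx,
    mul_mem_of_finrank_le_one hsq hle hx (hS hs)⟩

lemma Generates.succ_le_finrank_Lset (hμ : IsMixing F (μ · ·))
    (hsq : ∀ x, μ x x ∈ span F {x}) (hgen : Generates F (μ · ·) S) {k : ℕ} (hk : 1 ≤ k)
    (hne : Lset F (μ · ·) S k ≠ ⊤) : k + 1 ≤ finrank F (Lset F (μ · ·) S k) := by
  induction k, hk using Nat.le_induction with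
  | base => exact hgen.two_le_finrank_Lset_one hμ hsq hne
  | succ k hk ih =>
    have hne' : Lset F (μ · ·) S k ≠ ⊤ := ne_top_of_le_ne_top hne (Lset_mono k.le_succ)
    exact (ih hne').trans_lt (finrank_lt_finrank_of_lt (hgen.Lset_lt_succ hμ hk hne'))

theorem lie_length_le_dim_sub_one_general (hμ : IsMixing F (μ · ·))
    (hsq : ∀ x, μ x x ∈ span F {x}) (hdim : 2 ≤ finrank F A) (hgen : Generates F (μ · ·) S) :
    lenSet F (μ · ·) S ≤ finrank F A - 1 := by
  refine Nat.sInf_le ?_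
  by_contra hne
  have hle : finrank F A - 1 + 1 ≤ finrank F (Lset F (μ · ·) S (finrank F A - 1)) :=
    hgen.succ_le_finrank_Lset hμ hsq (by omega) hne
  have hlt : finrank F (Lset F (μ · ·) S (finrank F A - 1)) < finrank F A := finrank_lt hne
  omega

end MixingAlgebra

lemma isMixing_lie (F L : Type*) [Field F] [LieRing L] [LieAlgebra F L] :
    IsMixing F (fun x y : L => ⁅x, y⁆) := by
  refine fun x y z => ⟨?_, ?_⟩
  · beta_reduce
    rw [lie_lie]
    exact sub_mem (subset_span (by simp [Pset])) (subset_span (by simp [Pset]))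
  · beta_reduce
    rw [leibniz_lie]
    exact add_mem (subset_span (by simp [Pset])) (subset_span (by simp [Pset]))

/-- a finite-dimensional Lie algebra of dimension `d ≥ 2`, viewed as a
non-unital algebra whose multiplication is the bracket, has length at most `d − 1`. -/
theorem lie_length_le_dim_sub_one
    {F L : Type*} [Field F] [LieRing L] [LieAlgebra F L] [FiniteDimensional F L]
    (hdim : 2 ≤ finrank F L) :
    ∀ S : Set L, S.Finite → Generates F (fun x y : L => ⁅x, y⁆) S →
      lenSet F (fun x y : L => ⁅x, y⁆) S ≤ finrank F L - 1 :=
  fun _ _ hgen => lie_length_le_dim_sub_one_general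
    (μ := LinearMap.mk₂ F (fun x y : L => ⁅x, y⁆) add_lie smul_lie lie_add lie_smul)
    (isMixing_lie F L) (by simp) hdim hgen
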